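/- Fix integers N ≥ 2, d ≥ 1, K ≥ 1, let y_1, …, y_K ∈ ℝ^d satisfy the support condition ⋂_{k=1}^{K} {X : f̃_{y_k}(X) = 0} = Ω, and let f_k be the corresponding normalized basis (f_k(X) = f̃_{y_k}(X)/√(∑_i f̃_{y_i}(X)²) off Ω and f_k = 0 on Ω). Then for every anti-symmetric continuous Ψ : (ℝ^d)^N → ℝ and each k ∈ {1, …, K}, the function Φ^k := f_k²·Ψ is continuous, anti-symmetric, vanishes at every X for which y_kᵀX_i = y_kᵀX_j for some i ≠ j, and ∑_{k=1}^{K} Φ^k = Ψ. -/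

import Mathlib

/-!
Write `v_i = -yᵀX_i`. Then `f̃_y(X)` is the Vandermonde determinant of `v`, so it changes by the
sign of `π` when the particles are permuted by `π`, and it vanishes exactly when two of the `v_i`
coincide. By the support condition, `S = ∑ k, f̃_{y_k}²` vanishes exactly on `Ω`, so that
`f_k² = f̃_{y_k}² / S` holds everywhere with the convention `0 / 0 = 0`. This is permutation
invariant, bounded by `1`, continuous off `Ω`, and sums to `1` over `k` off `Ω`. An anti-symmetric
`Ψ` vanishes on `Ω`, which gives the sum formula there and, by squeezing `|f_k² Ψ| ≤ |Ψ|`, the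
continuity of `f_k² Ψ` at the points of `Ω`.
-/

/-- `f̃_y(X) = ∏_{i<j} yᵀ(X_i − X_j)`. -/
noncomputable def ftilde (N d : ℕ) (y : Fin d → ℝ) (X : Fin N → Fin d → ℝ) : ℝ :=
  ∏ i : Fin N, ∏ j ∈ Finset.Ioi i, (∑ l : Fin d, y l * (X i l - X j l))

/-- The intrinsic zero set `Ω`. -/
def intrinsicZero (N d : ℕ) : Set (Fin N → Fin d → ℝ) :=
  {X | ∃ i j : Fin N, i ≠ j ∧ X i = X j}

open Classical in
/-- The normalized basis `f_k`. -/
noncomputable def fBasis (N d K : ℕ) (y : Fin K → Fin d → ℝ) (k : Fin K)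
    (X : Fin N → Fin d → ℝ) : ℝ :=
  if X ∈ intrinsicZero N d then 0
  else ftilde N d (y k) X / Real.sqrt (∑ i : Fin K, (ftilde N d (y i) X) ^ 2)

/-- `Ψ` is anti-symmetric. -/
def IsAntisym (N d : ℕ) (Ψ : (Fin N → Fin d → ℝ) → ℝ) : Prop :=
  ∀ (π : Equiv.Perm (Fin N)) (X : Fin N → Fin d → ℝ),
    Ψ (fun i => X (π i)) = ((Equiv.Perm.sign π : ℤ) : ℝ) * Ψ X

lemma ftilde_eq_det (N d : ℕ) (y : Fin d → ℝ) (X : Fin N → Fin d → ℝ) :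
    ftilde N d y X = (Matrix.vandermonde fun i => -∑ l : Fin d, y l * X i l).det := by
  rw [Matrix.det_vandermonde, ftilde]
  refine Finset.prod_congr rfl fun i _ => Finset.prod_congr rfl fun j _ => ?_
  simp only [mul_sub, Finset.sum_sub_distrib]
  ring

lemma ftilde_perm_sq (N d : ℕ) (y : Fin d → ℝ) (π : Equiv.Perm (Fin N))
    (X : Fin N → Fin d → ℝ) :
    ftilde N d y (fun i => X (π i)) ^ 2 = ftilde N d y X ^ 2 := by
  have h := Matrix.det_permute π (Matrix.vandermonde fun i => -∑ l : Fin d, y l * X i l)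
  have h' : ftilde N d y (fun i => X (π i)) =
      ((Equiv.Perm.sign π : ℤ) : ℝ) * ftilde N d y X := by
    rw [ftilde_eq_det, ftilde_eq_det, ← h]
    rfl
  rw [h', mul_pow]
  rcases Int.units_eq_one_or (Equiv.Perm.sign π) with hs | hs <;> simp [hs]

lemma continuous_ftilde (N d : ℕ) (y : Fin d → ℝ) : Continuous (ftilde N d y) := by
  unfold ftilde
  fun_prop

lemma IsAntisym.eq_zero_of_mem {N d : ℕ} {Ψ : (Fin N → Fin d → ℝ) → ℝ} (h : IsAntisym N d Ψ)
    {X : Fin N → Fin d → ℝ} (hX : X ∈ intrinsicZero N d) : Ψ X = 0 := by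
  obtain ⟨i, j, hij, he⟩ := hX
  have h1 := h (Equiv.swap i j) X
  have h2 : (fun m => X (Equiv.swap i j m)) = X := by
    funext m
    rw [Equiv.swap_apply_def]
    split_ifs with h1 h2
    · rw [h1, he]
    · rw [h2, he]
    · rfl
  rw [h2, Equiv.Perm.sign_swap hij] at h1
  simp only [Units.val_neg, Units.val_one, Int.cast_neg, Int.cast_one] at h1
  linarith

lemma sum_sq_eq_zero_iff {N d K : ℕ} {y : Fin K → Fin d → ℝ}
    (hsupp : (⋂ k : Fin K, {X : Fin N → Fin d → ℝ | ftilde N d (y k) X = 0})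
      = intrinsicZero N d) (X : Fin N → Fin d → ℝ) :
    ∑ i : Fin K, ftilde N d (y i) X ^ 2 = 0 ↔ X ∈ intrinsicZero N d := by
  rw [← hsupp, Finset.sum_eq_zero_iff_of_nonneg fun i _ => sq_nonneg _]
  simp

/-- The squared basis function is a single quotient, on `Ω` as well: there it is `0 / 0 = 0`. -/
lemma fBasis_sq {N d K : ℕ} {y : Fin K → Fin d → ℝ}
    (hsupp : (⋂ k : Fin K, {X : Fin N → Fin d → ℝ | ftilde N d (y k) X = 0})
      = intrinsicZero N d) (k : Fin K) (X : Fin N → Fin d → ℝ) :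
    fBasis N d K y k X ^ 2 =
      ftilde N d (y k) X ^ 2 / ∑ i : Fin K, ftilde N d (y i) X ^ 2 := by
  unfold fBasis
  split_ifs with h
  · rw [(sum_sq_eq_zero_iff hsupp X).2 h]
    simp
  · rw [div_pow, Real.sq_sqrt (Finset.sum_nonneg fun i _ => sq_nonneg _)]

theorem stmt_13 (N d K : ℕ) (hN : 2 ≤ N) (hd : 1 ≤ d) (hK : 1 ≤ K)
    (y : Fin K → Fin d → ℝ)
    (hsupp : (⋂ k : Fin K, {X : Fin N → Fin d → ℝ | ftilde N d (y k) X = 0})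
      = intrinsicZero N d)
    (Ψ : (Fin N → Fin d → ℝ) → ℝ) (hΨcont : Continuous Ψ) (hΨanti : IsAntisym N d Ψ) :
    (∀ k : Fin K, Continuous (fun X => (fBasis N d K y k X) ^ 2 * Ψ X)) ∧
    (∀ k : Fin K, IsAntisym N d (fun X => (fBasis N d K y k X) ^ 2 * Ψ X)) ∧
    (∀ (k : Fin K) (X : Fin N → Fin d → ℝ),
      (∃ i j : Fin N, i ≠ j ∧ (∑ l : Fin d, y k l * X i l) = ∑ l : Fin d, y k l * X j l) →
      (fBasis N d K y k X) ^ 2 * Ψ X = 0) ∧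
    (∀ X : Fin N → Fin d → ℝ,
      ∑ k : Fin K, (fBasis N d K y k X) ^ 2 * Ψ X = Ψ X) := by
  simp only [fBasis_sq hsupp]
  refine ⟨fun k => ?_, fun k π X => ?_, fun k X hX => ?_, fun X => ?_⟩
  · have hS : Continuous fun X : Fin N → Fin d → ℝ => ∑ i : Fin K, ftilde N d (y i) X ^ 2 :=
      continuous_finsetSum _ fun i _ => (continuous_ftilde N d (y i)).pow 2
    rw [continuous_iff_continuousAt]
    intro X
    by_cases h : X ∈ intrinsicZero N d
    · have h0 : Ψ X = 0 := hΨanti.eq_zero_of_mem h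
      have hlim : Filter.Tendsto (fun Z => |Ψ Z|) (nhds X) (nhds 0) := by
        simpa [h0] using hΨcont.abs.tendsto X
      unfold ContinuousAt
      beta_reduce
      rw [h0, mul_zero]
      refine squeeze_zero_norm (fun Z => ?_) hlim
      have hnn : 0 ≤ ∑ i : Fin K, ftilde N d (y i) Z ^ 2 :=
        Finset.sum_nonneg fun i _ => sq_nonneg _
      rw [norm_mul, Real.norm_eq_abs, Real.norm_eq_abs, abs_of_nonneg (by positivity)]
      refine mul_le_of_le_one_left (abs_nonneg _) (div_le_one_of_le₀ ?_ hnn)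
      exact Finset.single_le_sum (f := fun i => ftilde N d (y i) Z ^ 2)
        (fun i _ => sq_nonneg _) (Finset.mem_univ k)
    · exact (((continuous_ftilde N d (y k)).pow 2).continuousAt.div hS.continuousAt
        fun h0 => h ((sum_sq_eq_zero_iff hsupp X).1 h0)).mul hΨcont.continuousAt
  · simp only [ftilde_perm_sq]
    rw [hΨanti π X]
    ring
  · obtain ⟨i, j, hij, he⟩ := hX
    have h0 : ftilde N d (y k) X = 0 := by
      rw [ftilde_eq_det, Matrix.det_vandermonde_eq_zero_iff]
      exact ⟨i, j, by rw [he], hij⟩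
    simp [h0]
  · rw [← Finset.sum_mul, ← Finset.sum_div]
    by_cases h : X ∈ intrinsicZero N d
    · rw [hΨanti.eq_zero_of_mem h, mul_zero]
    · rw [div_self fun h0 => h ((sum_sq_eq_zero_iff hsupp X).1 h0), one_mul]
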